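/- Let n ≥ 1 and let Ω be the open ball in ℝⁿ of radius d/2 centered at 0. Let A : Ω → (0,∞) and f : Ω → ℝ be continuous radial functions, A(x) = Ã(‖x‖) and f(x) = f̃(‖x‖). Let u : Ω → ℝ be a radial C¹ function, u(x) = ũ(‖x‖) with ũ differentiable on (0, d/2), and suppose the vector field x ↦ A(x) ∇u(x) is C¹ on Ω with div( A(x) ∇u(x) ) = −f(x) for all x ∈ Ω. Then for every t ∈ (0, d/2): ũ'(t) = −(1/Ã(t)) ∫₀^t (s/t)^{n−1} f̃(s) ds. -/

import Mathlib

open MeasureTheory Metric Set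

noncomputable section

abbrev Euc (n : ℕ) := EuclideanSpace ℝ (Fin n)

/-- The nonlocal functional `l_r(v)(x) = ∫_{Ω ∩ B̄(x,r)} g(y) v(y) dy`. -/
def lr {n : ℕ} (Ω : Set (Euc n)) (g : Euc n → ℝ) (r : ℝ) (v : Euc n → ℝ) (x : Euc n) : ℝ :=
  ∫ y in Ω ∩ closedBall x r, g y * v y

/-- Divergence of a vector field on `ℝⁿ`. -/
def diverg {n : ℕ} (F : Euc n → Euc n) (x : Euc n) : ℝ :=
  ∑ i, fderiv ℝ F x (EuclideanSpace.single i 1) i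

/-- A classical solution of the nonlocal parabolic problem
`∂ₜ u = div(a(l_r(u)) ∇u) + f` on the time interval `I`, vanishing on `I × ∂Ω`. -/
structure IsParabolicSol {n : ℕ} (Ω : Set (Euc n)) (g : Euc n → ℝ) (r : ℝ)
    (a : ℝ → ℝ) (f : ℝ → Euc n → ℝ) (I : Set ℝ) (u : ℝ → Euc n → ℝ) : Prop where
  cont : ContinuousOn (fun p : ℝ × Euc n => u p.1 p.2) (I ×ˢ closure Ω)
  bdry : ∀ t ∈ I, ∀ x ∈ frontier Ω, u t x = 0
  tdiff : ∀ t ∈ interior I, ∀ x ∈ Ω, DifferentiableAt ℝ (fun s => u s x) t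
  xreg : ∀ t ∈ interior I, ContDiffOn ℝ 2 (u t) Ω
  fdiff : ∀ t ∈ interior I, ∀ x ∈ Ω,
    DifferentiableAt ℝ (fun y => a (lr Ω g r (u t) y) • gradient (u t) y) x
  pde : ∀ t ∈ interior I, ∀ x ∈ Ω,
    deriv (fun s => u s x) t =
      diverg (fun y => a (lr Ω g r (u t) y) • gradient (u t) y) x + f t x

/-!
Since `u` and `A` are radial, the flux `A ∇u` is the radial field `g(‖x‖) x / ‖x‖`, `g = Ã ũ'`.
In dimension `n`, its divergence at distance `s` from the origin is `g' + (n - 1) / s * g`, so that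
`(s ^ (n - 1) * g)' = s ^ (n - 1) * div(A ∇u)`, and the equation is integrated from `0` to `t`.
The boundary term at `0` vanishes even for `n = 1`, because the gradient of an even function
vanishes at `0`.
-/

theorem hasDerivAt_pow_mul {𝕜 : Type*} [NontriviallyNormedField 𝕜] {g : 𝕜 → 𝕜} {g' s : 𝕜}
    (m : ℕ) (hs : s ≠ 0) (hg : HasDerivAt g g' s) :
    HasDerivAt (fun r => r ^ m * g r) (s ^ m * (g' + m / s * g s)) s := by
  refine ((hasDerivAt_pow m s).mul hg).congr_deriv ?_
  rcases m with _ | m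
  · simp
  · simp only [Nat.add_sub_cancel]
    field_simp
    ring

section NormedSpace

open Module Topology

variable {E F : Type*} [NormedAddCommGroup E] [NormedSpace ℝ E]
  [NormedAddCommGroup F] [NormedSpace ℝ F] {R : ℝ} {e : E}

/-- The divergence of a vector field `F`, encoded without coordinates as the trace of its
derivative; it is `0` where `F` is not differentiable. -/
def divergence (F : E → E) (x : E) : ℝ :=
  LinearMap.trace ℝ E (fderiv ℝ F x)

theorem divergence_smul_self [FiniteDimensional ℝ E] {φ : E → ℝ} {x : E}
    (hφ : DifferentiableAt ℝ φ x) :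
    divergence (fun y => φ y • y) x = finrank ℝ E * φ x + fderiv ℝ φ x x := by
  have hderiv : fderiv ℝ (fun y => φ y • y) x =
      φ x • ContinuousLinearMap.id ℝ E + (fderiv ℝ φ x).smulRight x :=
    (hφ.hasFDerivAt.smul (hasFDerivAt_id x)).fderiv
  have htrace : LinearMap.trace ℝ E ((fderiv ℝ φ x).toLinearMap.smulRight x) = fderiv ℝ φ x x :=
    LinearMap.trace_smulRight _ x
  simp [divergence, hderiv, htrace, mul_comm]

theorem fderiv_zero_of_eventually_even {u : E → F} (hu : ∀ᶠ x in 𝓝 0, u (-x) = u x) :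
    fderiv ℝ u 0 = 0 := by
  have hneg : fderiv ℝ u 0 = -fderiv ℝ u 0 := by
    calc fderiv ℝ u 0 = fderiv ℝ (fun x => u (-x)) 0 := (Filter.EventuallyEq.fderiv_eq hu).symm
      _ = -fderiv ℝ u 0 := by simpa using fderiv_comp_smul (𝕜 := ℝ) (f := u) (x := 0) (-1)
  have := IsAddTorsionFree.of_isTorsionFree ℝ (E →L[ℝ] F)
  exact self_eq_neg.1 hneg

theorem norm_smul_of_norm_eq_one (he : ‖e‖ = 1) {s : ℝ} (hs : 0 ≤ s) : ‖s • e‖ = s := by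
  rw [norm_smul, he, mul_one, Real.norm_of_nonneg hs]

theorem smul_mem_ball_of_norm_eq_one (he : ‖e‖ = 1) {s : ℝ} (hs : s ∈ Ico 0 R) :
    s • e ∈ ball (0 : E) R := by
  rw [mem_ball_zero_iff, norm_smul_of_norm_eq_one he hs.1]
  exact hs.2

theorem continuousOn_profile [Nontrivial E] {X : Type*} [TopologicalSpace X]
    {f : E → X} {p : ℝ → X}
    (hf : ContinuousOn f (ball 0 R)) (hrad : EqOn f (fun x => p ‖x‖) (ball 0 R)) :
    ContinuousOn p (Ico 0 R) := by
  obtain ⟨e, he⟩ := exists_norm_eq E zero_le_one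
  have hray : MapsTo (fun s : ℝ => s • e) (Ico 0 R) (ball 0 R) :=
    fun s hs => smul_mem_ball_of_norm_eq_one he hs
  refine (hf.comp (by fun_prop) hray).congr fun s hs => ?_
  simp [hrad (hray hs), norm_smul_of_norm_eq_one he hs.1]

theorem differentiableAt_profile [Nontrivial E] {u : E → F} {v : ℝ → F}
    (hu : DifferentiableOn ℝ u (ball 0 R)) (hrad : EqOn u (fun x => v ‖x‖) (ball 0 R))
    {s : ℝ} (hs : s ∈ Ioo 0 R) : DifferentiableAt ℝ v s := by
  obtain ⟨e, he⟩ := exists_norm_eq E zero_le_one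
  have hray : MapsTo (fun s : ℝ => s • e) (Ioo 0 R) (ball 0 R) :=
    fun s hs => smul_mem_ball_of_norm_eq_one he (Ioo_subset_Ico_self hs)
  have hv : DifferentiableOn ℝ v (Ioo 0 R) :=
    (hu.comp (by fun_prop) hray).congr fun s hs => by
      simp [hrad (hray hs), norm_smul_of_norm_eq_one he hs.1.le]
  exact hv.differentiableAt (isOpen_Ioo.mem_nhds hs)

end NormedSpace

section RadialFields

open Module InnerProductSpace Topology

variable {E : Type*} [NormedAddCommGroup E] [InnerProductSpace ℝ E] {R : ℝ} {e : E}

/-- The radial vector field `x ↦ g(‖x‖) x / ‖x‖` with radial component `g`. Division by zero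
makes it vanish at the origin, whatever `g 0` is. -/
def radialField (g : ℝ → ℝ) (x : E) : E :=
  (g ‖x‖ / ‖x‖) • x

theorem diverg_eq_divergence {n : ℕ} (F : Euc n → Euc n) : diverg F = divergence F := by
  ext x
  rw [divergence, LinearMap.trace_eq_sum_inner _ (EuclideanSpace.basisFun (Fin n) ℝ)]
  simp [diverg, EuclideanSpace.inner_single_left]

theorem hasGradientAt_comp_norm [CompleteSpace E] {v : ℝ → ℝ} {v' : ℝ} {x : E} (hx : x ≠ 0)
    (hv : HasDerivAt v v' ‖x‖) :
    HasGradientAt (fun y => v ‖y‖) ((v' / ‖x‖) • x) x := by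
  have hnorm : HasFDerivAt (fun y : E => ‖y‖) ((1 / (2 * ‖x‖)) • 2 • innerSL ℝ x) x := by
    simpa [Real.sqrt_sq] using (hasStrictFDerivAt_norm_sq x).hasFDerivAt.sqrt (by simpa using hx)
  refine hasGradientAt_iff_hasFDerivAt.2 ((hv.comp_hasFDerivAt x hnorm).congr_fderiv ?_)
  ext y
  simp only [one_div, mul_inv_rev, smul_apply, coe_innerSL_apply, nsmul_eq_mul, Nat.cast_ofNat,
    smul_eq_mul, map_smul, toDual_apply_apply]
  ring

theorem gradient_eqOn_radialField [CompleteSpace E] [Nontrivial E] {u : E → ℝ} {v : ℝ → ℝ}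
    (hu : DifferentiableOn ℝ u (ball 0 R)) (hrad : EqOn u (fun x => v ‖x‖) (ball 0 R)) :
    EqOn (gradient u) (radialField (deriv v)) (ball 0 R) := by
  intro x hx
  have hrad_near : u =ᶠ[𝓝 x] fun y => v ‖y‖ := hrad.eventuallyEq_of_mem (isOpen_ball.mem_nhds hx)
  rcases eq_or_ne x 0 with rfl | hx0
  · have heven : ∀ᶠ y in 𝓝 0, u (-y) = u y := by
      filter_upwards [isOpen_ball.mem_nhds hx] with y hy
      have hy_neg : -y ∈ ball (0 : E) R := by simpa using hy
      simp [hrad hy, hrad hy_neg]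
    simp [gradient, fderiv_zero_of_eventually_even heven, radialField]
  · have hv := differentiableAt_profile hu hrad
      ⟨norm_pos_iff.2 hx0, mem_ball_zero_iff.1 hx⟩
    exact ((hasGradientAt_comp_norm hx0 hv.hasDerivAt).congr_of_eventuallyEq hrad_near).gradient

theorem inner_radialField_smul (he : ‖e‖ = 1) (g : ℝ → ℝ) {s : ℝ} (hs : 0 < s) :
    ⟪e, radialField g (s • e)⟫_ℝ = g s := by
  simp [radialField, norm_smul_of_norm_eq_one he hs.le, inner_smul_right, he, hs.ne']

theorem divergence_radialField [FiniteDimensional ℝ E] {g : ℝ → ℝ} {g' : ℝ} {x : E} (hx : x ≠ 0)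
    (hg : HasDerivAt g g' ‖x‖) :
    divergence (radialField g) x = g' + (finrank ℝ E - 1) / ‖x‖ * g ‖x‖ := by
  have hx' : ‖x‖ ≠ 0 := norm_ne_zero_iff.2 hx
  have hφ := (hasGradientAt_comp_norm hx (hg.fun_div (hasDerivAt_id' ‖x‖) hx')).hasFDerivAt
  have hdiv := divergence_smul_self hφ.differentiableAt
  rw [hφ.fderiv] at hdiv
  refine hdiv.trans ?_
  simp only [toDual_apply_apply, inner_smul_left, real_inner_self_eq_norm_sq, conj_trivial]
  field_simp
  ring

theorem differentiableAt_inner_radialField_smul (he : ‖e‖ = 1) {g : ℝ → ℝ}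
    (hg : DifferentiableOn ℝ (radialField g) (ball (0 : E) R)) {s : ℝ} (hs : s ∈ Ico 0 R) :
    DifferentiableAt ℝ (fun r => ⟪e, radialField g (r • e)⟫_ℝ) s := by
  have hfield : DifferentiableAt ℝ (radialField g) (s • e) :=
    hg.differentiableAt (isOpen_ball.mem_nhds (smul_mem_ball_of_norm_eq_one he hs))
  exact (differentiableAt_const e).inner ℝ
    (hfield.comp s (differentiableAt_id.smul_const e))

/-- The divergence theorem on the ball of radius `t`, divided by the area of the unit sphere. -/
theorem integral_pow_mul_divergence_radialField [FiniteDimensional ℝ E] [Nontrivial E]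
    {g p : ℝ → ℝ} (hg : DifferentiableOn ℝ (radialField g) (ball (0 : E) R))
    (hdiv : ∀ x ∈ ball (0 : E) R, divergence (radialField g) x = p ‖x‖)
    {t : ℝ} (ht : t ∈ Ioo 0 R)
    (hint : IntervalIntegrable (fun s => s ^ (finrank ℝ E - 1) * p s) volume 0 t) :
    ∫ s in 0..t, s ^ (finrank ℝ E - 1) * p s = t ^ (finrank ℝ E - 1) * g t := by
  obtain ⟨e, he⟩ := exists_norm_eq E zero_le_one
  -- `G` agrees with `g` on `(0, R)` but, unlike `g`, it is continuous at `0`.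
  set G : ℝ → ℝ := fun r => ⟪e, radialField g (r • e)⟫_ℝ
  have hG : ∀ s ∈ Ico 0 R, DifferentiableAt ℝ G s :=
    fun s hs => differentiableAt_inner_radialField_smul he hg hs
  have hG_zero : G 0 = 0 := by simp [G, radialField]
  have hG_eq : ∀ s, 0 < s → G s = g s := fun s hs => inner_radialField_smul he g hs
  have hcont : ContinuousOn (fun s => s ^ (finrank ℝ E - 1) * G s) (Icc 0 t) := fun s hs =>
    ((continuousAt_id.pow _).mul (hG s ⟨hs.1, hs.2.trans_lt ht.2⟩).continuousAt).continuousWithinAt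
  have hderiv : ∀ s ∈ Ioo 0 t, HasDerivAt (fun r => r ^ (finrank ℝ E - 1) * G r)
      (s ^ (finrank ℝ E - 1) * p s) s := by
    intro s hs
    have hsR : s ∈ Ico 0 R := ⟨hs.1.le, hs.2.trans ht.2⟩
    have hnorm : ‖s • e‖ = s := norm_smul_of_norm_eq_one he hs.1.le
    have hse : s • e ≠ 0 := norm_ne_zero_iff.1 (hnorm.symm ▸ hs.1.ne')
    have hgs : HasDerivAt g (deriv G s) s := (hG s hsR).hasDerivAt.congr_of_eventuallyEq <| by
      filter_upwards [lt_mem_nhds hs.1] with r hr using (hG_eq r hr).symm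
    have hp : p s = deriv G s + (finrank ℝ E - 1 : ℕ) / s * G s := by
      have h := divergence_radialField hse (hnorm.symm ▸ hgs)
      rwa [hdiv _ (smul_mem_ball_of_norm_eq_one he hsR), hnorm, ← hG_eq s hs.1,
        ← Nat.cast_pred finrank_pos] at h
    exact hp ▸ hasDerivAt_pow_mul _ hs.1.ne' (hG s hsR).hasDerivAt
  rw [intervalIntegral.integral_eq_sub_of_hasDerivAt_of_le ht.1.le hcont hderiv hint,
    hG_zero, mul_zero, sub_zero, hG_eq t ht.1]

theorem statement3_general [FiniteDimensional ℝ E] [Nontrivial E]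
    {A f u : E → ℝ} {Atil ftil util : ℝ → ℝ}
    (hf : ContinuousOn f (ball 0 R))
    (hA : ∀ x ∈ ball 0 R, A x ≠ 0)
    (hArad : EqOn A (fun x => Atil ‖x‖) (ball 0 R))
    (hfrad : EqOn f (fun x => ftil ‖x‖) (ball 0 R))
    (hurad : EqOn u (fun x => util ‖x‖) (ball 0 R))
    (hu : DifferentiableOn ℝ u (ball 0 R))
    (hflux : DifferentiableOn ℝ (fun x => A x • gradient u x) (ball 0 R))
    (hpde : ∀ x ∈ ball 0 R, divergence (fun y => A y • gradient u y) x = -f x)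
    {t : ℝ} (ht : t ∈ Ioo 0 R) :
    deriv util t = -(1 / Atil t) * ∫ s in 0..t, (s / t) ^ (finrank ℝ E - 1) * ftil s := by
  have hradial : EqOn (fun x => A x • gradient u x)
      (radialField fun s => Atil s * deriv util s) (ball 0 R) := fun x hx => by
    simp only [gradient_eqOn_radialField hu hurad hx, hArad hx, radialField, smul_smul,
      mul_div_assoc]
  have hdiv : ∀ x ∈ ball (0 : E) R,
      divergence (radialField fun s => Atil s * deriv util s) x = -ftil ‖x‖ := fun x hx => by
    have hfx : f x = ftil ‖x‖ := hfrad hx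
    rw [← hfx, ← hpde x hx, divergence, divergence,
      (hradial.eventuallyEq_of_mem (isOpen_ball.mem_nhds hx)).fderiv_eq]
  have hint : IntervalIntegrable (fun s => s ^ (finrank ℝ E - 1) * -ftil s) volume 0 t := by
    have hsub : uIcc 0 t ⊆ Ico 0 R := uIcc_of_le ht.1.le ▸ Icc_subset_Ico_right ht.2
    exact (((continuousOn_id.pow _).mul (continuousOn_profile hf hfrad).neg).mono
      hsub).intervalIntegrable
  have hflux_t := integral_pow_mul_divergence_radialField
    (hflux.congr fun x hx => (hradial hx).symm) hdiv ht hint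
  have hAt : Atil t ≠ 0 := by
    obtain ⟨x, hx⟩ := exists_norm_eq E ht.1.le
    have hxR : x ∈ ball (0 : E) R := mem_ball_zero_iff.2 (hx.trans_lt ht.2)
    simpa [hArad hxR, hx] using hA x hxR
  have ht0 : t ≠ 0 := ht.1.ne'
  simp only [mul_neg, intervalIntegral.integral_neg] at hflux_t
  simp only [div_pow, div_mul_eq_mul_div, intervalIntegral.integral_div]
  rw [neg_eq_iff_eq_neg.1 hflux_t]
  field_simp

end RadialFields

/-- the explicit formula `ũ'(t) = -(1/Ã(t)) ∫₀ᵗ (s/t)^{n-1} f̃(s) ds`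
for a radial solution of `-div(A ∇u) = f` on the ball of radius `d/2`. -/
theorem statement3 {n : ℕ} (hn : 1 ≤ n) (d : ℝ) (hd : 0 < d)
    (A f u : Euc n → ℝ) (Atil ftil util : ℝ → ℝ)
    (hAc : ContinuousOn A (ball (0 : Euc n) (d / 2)))
    (hfc : ContinuousOn f (ball (0 : Euc n) (d / 2)))
    (hApos : ∀ x ∈ ball (0 : Euc n) (d / 2), 0 < A x)
    (hArad : ∀ x ∈ ball (0 : Euc n) (d / 2), A x = Atil ‖x‖)
    (hfrad : ∀ x ∈ ball (0 : Euc n) (d / 2), f x = ftil ‖x‖)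
    (hurad : ∀ x ∈ ball (0 : Euc n) (d / 2), u x = util ‖x‖)
    (huC1 : ContDiffOn ℝ 1 u (ball (0 : Euc n) (d / 2)))
    (hutil : ∀ t ∈ Ioo (0 : ℝ) (d / 2), DifferentiableAt ℝ util t)
    (hFC1 : ContDiffOn ℝ 1 (fun x => A x • gradient u x) (ball (0 : Euc n) (d / 2)))
    (hpde : ∀ x ∈ ball (0 : Euc n) (d / 2),
      diverg (fun y => A y • gradient u y) x = -(f x)) :
    ∀ t ∈ Ioo (0 : ℝ) (d / 2),
      deriv util t = -(1 / Atil t) * ∫ s in (0:ℝ)..t, (s / t) ^ (n - 1) * ftil s := by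
  have : NeZero n := ⟨by lia⟩
  simpa using fun t ht => statement3_general hfc (fun x hx => (hApos x hx).ne') hArad hfrad hurad
    (huC1.differentiableOn one_ne_zero) (hFC1.differentiableOn one_ne_zero)
    (diverg_eq_divergence (n := n) _ ▸ hpde) ht
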